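/- arXiv:0804.1798 — 8 statements merged into one kernel-verified Lean document; each statement's English description precedes it below -/
import Mathlib

section
/- Let M be a proper metric space with a fixed base point x₀, and write r(x) = dist(x₀, x). Let Σ be a Hausdorff topological space, let f : Σ → M × ℝ be a continuous proper map, and let 0 < a < 1. Assume there exists a compact set K ⊆ Σ such that for every p ∈ Σ \ K, writing f(p) = (x_p, t_p), one has |t_p| ≤ a·r(x_p). Then the function φ : Σ → ℝ defined by φ(p) = r(x_p)² − t_p² is a proper map, and there exists a compact set K' ⊆ Σ such that φ(p) > 0 for every p ∈ Σ \ K'. -/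
/-!
Off `K` the wedge condition gives `φ ≥ (1 - a²) r²`, so a bound `φ ≤ R` bounds `r`, and hence also
`|t| ≤ a r`. The sublevel set `{φ ≤ R}` is therefore a closed subset of the union of `K` with the
preimage under `f` of a closed ball of `M × ℝ`; as this ball is compact and `f` is proper, every
sublevel set of `φ` is compact. The sublevel set of level `0` serves as `K'`, and the preimage of a
compact set is a closed subset of a sublevel set, which gives properness.
-/


/-- metric content of Proposition 3.4.
Let `M` be a proper metric space with base point `x₀`, `r x = dist x₀ x`.
Let `E` be a Hausdorff space, `f : E → M × ℝ` a continuous proper map, `0 < a < 1`.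
If there is a compact `K ⊆ E` such that for every `p ∉ K`, writing `f p = (x, t)`,
one has `|t| ≤ a * r x`, then `φ p = r (f p).1 ^ 2 - (f p).2 ^ 2` is a proper map
and is positive off some compact set `K'`. -/
theorem stmt_0 {M : Type*} [MetricSpace M] [ProperSpace M] (x₀ : M)
    {E : Type*} [TopologicalSpace E] [T2Space E]
    (f : E → M × ℝ) (hf : IsProperMap f)
    (a : ℝ) (ha₀ : 0 < a) (ha₁ : a < 1)
    (hK : ∃ K : Set E, IsCompact K ∧
      ∀ p ∉ K, |(f p).2| ≤ a * dist x₀ (f p).1) :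
    IsProperMap (fun p : E => dist x₀ (f p).1 ^ 2 - (f p).2 ^ 2) ∧
      ∃ K' : Set E, IsCompact K' ∧
        ∀ p ∉ K', 0 < dist x₀ (f p).1 ^ 2 - (f p).2 ^ 2 := by
  obtain ⟨K, hKc, hK⟩ := hK
  have hcont : Continuous (fun p : E => dist x₀ (f p).1 ^ 2 - (f p).2 ^ 2) := by
    have := hf.continuous
    fun_prop
  have hpos : 0 < 1 - a ^ 2 := by nlinarith
  have hsub : ∀ R : ℝ, IsCompact {p : E | dist x₀ (f p).1 ^ 2 - (f p).2 ^ 2 ≤ R} := by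
    intro R
    refine (hKc.union (hf.isCompact_preimage (isCompact_closedBall (x₀, (0 : ℝ))
      (√(R / (1 - a ^ 2)))))).of_isClosed_subset (isClosed_le hcont continuous_const) ?_
    intro p hp
    by_cases hpK : p ∈ K
    · exact Or.inl hpK
    · right
      have hp' : dist x₀ (f p).1 ^ 2 - (f p).2 ^ 2 ≤ R := hp
      have ht := hK p hpK
      have hr : 0 ≤ dist x₀ (f p).1 := dist_nonneg
      have htr : |(f p).2| ≤ dist x₀ (f p).1 := ht.trans (by nlinarith)
      have ht2 : (f p).2 ^ 2 ≤ (a * dist x₀ (f p).1) ^ 2 := by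
        rw [← sq_abs]
        gcongr
      have hrad : dist x₀ (f p).1 ≤ √(R / (1 - a ^ 2)) := by
        apply Real.le_sqrt_of_sq_le
        rw [le_div_iff₀ hpos]
        nlinarith
      rw [Set.mem_preimage, Metric.mem_closedBall, Prod.dist_eq, max_le_iff]
      refine ⟨by rwa [dist_comm], ?_⟩
      rw [Real.dist_0_eq_abs]
      exact htr.trans hrad
  refine ⟨isProperMap_iff_isCompact_preimage.2 ⟨hcont, fun C hC => ?_⟩, _, hsub 0,
    fun p hp => not_le.1 hp⟩
  obtain ⟨R, hR⟩ := hC.bddAbove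
  exact (hsub R).of_isClosed_subset (hC.isClosed.preimage hcont) fun p hp => hR hp
end

section
/- Let M be a proper metric space with base point x₀, and write r(x) = dist(x₀, x). Assume that for every x ∈ M with x ≠ x₀ there exists a minimizing geodesic γ_x : [0, r(x)] → M from x₀ to x such that the composition u ∘ γ_x is differentiable on [0, r(x)] with derivative strictly between −1 and 1 at every point, where u : M → ℝ is a continuous function with u(x₀) = 0. Then the function φ : M → ℝ defined by φ(x) = r(x)² − u(x)² satisfies φ(x) > 0 for every x ≠ x₀, and φ is a proper map (the preimage of every compact subset of ℝ is compact). -/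
/-!
The mean value theorem along the geodesic from `x₀` to `x` gives `|u x| < r x`, hence `φ x > 0`.

For properness, `1 - |u|` is bounded below by some `δ > 0` on the compact unit sphere around `x₀`.
A geodesic to a point with `r x ≥ 1` crosses that sphere at time `1`, and past this time `|u|` grows
no faster than arc length, so `|u x| ≤ r x - δ`. Therefore `φ = (r - |u|) (r + |u|) ≥ δ r` outside
the unit ball: the preimage of a bounded set is bounded, and `M` is a proper space.
-/

/-- Strict mean value inequality: the derivative bound is only pointwise, yet increments are
strictly smaller than the length of the interval. -/
lemma abs_sub_lt_of_deriv_bound {f v : ℝ → ℝ} {l a b : ℝ}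
    (hf : ∀ s ∈ Set.Icc (0:ℝ) l,
      HasDerivWithinAt f (v s) (Set.Icc (0:ℝ) l) s ∧ -1 < v s ∧ v s < 1)
    (ha : 0 ≤ a) (hab : a < b) (hb : b ≤ l) : |f b - f a| < b - a := by
  obtain ⟨c, hc, hcv⟩ := exists_hasDerivAt_eq_slope f v hab
    (fun s hs => ((hf s ⟨ha.trans hs.1, hs.2.trans hb⟩).1.continuousWithinAt).mono
      (Set.Icc_subset_Icc ha hb))
    (fun s hs => (hf s ⟨ha.trans hs.1.le, hs.2.le.trans hb⟩).1.hasDerivAt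
      (Icc_mem_nhds (ha.trans_lt hs.1) (hs.2.trans_le hb)))
  obtain ⟨-, h1, h2⟩ := hf c ⟨ha.trans hc.1.le, hc.2.le.trans hb⟩
  have hpos : 0 < b - a := sub_pos.2 hab
  rw [eq_div_iff hpos.ne'] at hcv
  rw [abs_lt]
  constructor <;> nlinarith


/-- metric content of Proposition 4.1, entire case.
`M` proper metric space with base point `x₀`, `r x = dist x₀ x`, `u : M → ℝ`
continuous with `u x₀ = 0`.  Assume that every `x ≠ x₀` is joined to `x₀` by a
minimizing geodesic `γ : [0, r x] → M` along which `u ∘ γ` is differentiable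
with derivative strictly between `-1` and `1`.  Then `φ x = r x ^ 2 - u x ^ 2`
is positive for `x ≠ x₀` and `φ` is a proper map. -/
theorem stmt_1 {M : Type*} [MetricSpace M] [ProperSpace M] (x₀ : M)
    (u : M → ℝ) (hu : Continuous u) (hu₀ : u x₀ = 0)
    (hgeo : ∀ x : M, x ≠ x₀ → ∃ γ : ℝ → M,
      γ 0 = x₀ ∧ γ (dist x₀ x) = x ∧
      (∀ s ∈ Set.Icc (0:ℝ) (dist x₀ x), ∀ s' ∈ Set.Icc (0:ℝ) (dist x₀ x),
        dist (γ s) (γ s') = |s - s'|) ∧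
      ∃ v' : ℝ → ℝ, ∀ s ∈ Set.Icc (0:ℝ) (dist x₀ x),
        HasDerivWithinAt (u ∘ γ) (v' s) (Set.Icc (0:ℝ) (dist x₀ x)) s ∧
        -1 < v' s ∧ v' s < 1) :
    (∀ x : M, x ≠ x₀ → 0 < dist x₀ x ^ 2 - u x ^ 2) ∧
      ∀ K : Set ℝ, IsCompact K →
        IsCompact ((fun x : M => dist x₀ x ^ 2 - u x ^ 2) ⁻¹' K) := by
  have hlt : ∀ x : M, x ≠ x₀ → |u x| < dist x₀ x := by
    intro x hx
    obtain ⟨γ, h0, h1, -, v', hv⟩ := hgeo x hx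
    have h := abs_sub_lt_of_deriv_bound hv le_rfl (dist_pos.2 hx.symm) le_rfl
    simpa [h0, h1, hu₀] using h
  refine ⟨fun x hx => sub_pos.2 (sq_lt_sq' (abs_lt.1 (hlt x hx)).1 (abs_lt.1 (hlt x hx)).2), ?_⟩
  obtain ⟨δ, hδ, hsph⟩ : ∃ δ : ℝ, 0 < δ ∧ ∀ y ∈ Metric.sphere x₀ 1, δ ≤ 1 - |u y| := by
    refine (isCompact_sphere x₀ 1).exists_forall_le' (by fun_prop) fun y hy => ?_
    rw [Metric.mem_sphere'] at hy
    have hne : y ≠ x₀ := by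
      rintro rfl
      simp at hy
    linarith [hlt y hne]
  have hfar : ∀ x : M, 1 < dist x₀ x → |u x| ≤ dist x₀ x - δ := by
    intro x hx
    have hne : x ≠ x₀ := by
      rintro rfl
      norm_num at hx
    obtain ⟨γ, h0, h1, hiso, v', hv⟩ := hgeo x hne
    have h := abs_sub_lt_of_deriv_bound hv zero_le_one hx le_rfl
    have hmem : γ 1 ∈ Metric.sphere x₀ 1 := by
      have h' := hiso 0 ⟨le_rfl, dist_nonneg⟩ 1 ⟨zero_le_one, hx.le⟩
      rw [Metric.mem_sphere', ← h0, h']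
      norm_num
    simp only [Function.comp_apply, h1] at h
    linarith [hsph _ hmem, abs_sub_abs_le_abs_sub (u x) (u (γ 1))]
  intro K hK
  obtain ⟨C, hC⟩ := hK.bddAbove
  refine (isCompact_closedBall x₀ (max 1 (C / δ))).of_isClosed_subset
    (hK.isClosed.preimage (by fun_prop)) fun x hx => ?_
  rw [Metric.mem_closedBall', le_max_iff, or_iff_not_imp_left, not_le, le_div_iff₀ hδ]
  intro h1
  have hφ : dist x₀ x ^ 2 - u x ^ 2 ≤ C := hC hx
  rw [← sq_abs (u x)] at hφ
  nlinarith [hfar x h1, abs_nonneg (u x)]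
end

section
/- Let u : ℝ² → ℝ be a twice continuously differentiable function such that (∂₁u(p))² + (∂₂u(p))² < 1 for every p ∈ ℝ², and suppose u satisfies the maximal surface equation (1 − (∂₂u)²)·∂₁∂₁u + 2·(∂₁u)·(∂₂u)·∂₁∂₂u + (1 − (∂₁u)²)·∂₂∂₂u = 0 at every point of ℝ². Then u is affine: there exist real constants a, b, c with a² + b² < 1 such that u(x, y) = a·x + b·y + c for all (x, y) ∈ ℝ². -/
/-!
Let `p = ∂₁u`, `q = ∂₂u` and `W = √(1 - p² - q²)`. For a maximal graph the two rows of the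
symmetric matrix `(a b; b c) = W⁻¹ (1 - p², -pq; -pq, 1 - q²)`, which is positive definite of
determinant one, are closed 1-forms (`closed_of_maximal`). So the statement follows from a form of
Jörgens' theorem (`jorgens`): such a matrix field on the whole plane, of class `C¹`, is constant.
Indeed, its entries then determine `W` and hence `p²` and `q²`, and `p`, `q` are continuous.

Jörgens' theorem is proved by Nitsche's argument. By the Poincaré lemma there are `F`, `G` with
`dF = a dx + b dy` and `dG = b dx + c dy`. The Lewy map `Ψ = (x + F) + i (y + G)` expands
distances, since `(F, G)` is a monotone vector field; it is also proper and open, hence a bijection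
from the plane onto `ℂ`. In the coordinate `Ψ` the function `h = (x - F) - i (y - G)` is
holomorphic with derivative `μ = (1 - a + i b) / (1 + a + i b)`, of modulus less than one because
`a > 0`. By Liouville's theorem `μ` is constant, and `μ` determines `a` and `b`.
-/

open Complex Set Filter Topology

/-- Poincaré lemma in the plane: a closed 1-form `f dx + g dy` is exact. -/
theorem exists_primitive {f g : ℝ × ℝ → ℝ} (hf : Differentiable ℝ f) (hg : Differentiable ℝ g)
    (hfg : ∀ p, fderiv ℝ f p (0, 1) = fderiv ℝ g p (1, 0)) :
    ∃ F : ℝ × ℝ → ℝ, ∀ p, HasFDerivAt F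
      (f p • ContinuousLinearMap.fst ℝ ℝ ℝ + g p • ContinuousLinearMap.snd ℝ ℝ ℝ) p := by
  have hω : ∀ p, HasFDerivAt
      (fun p => f p • ContinuousLinearMap.fst ℝ ℝ ℝ + g p • ContinuousLinearMap.snd ℝ ℝ ℝ)
      ((fderiv ℝ f p).smulRight (ContinuousLinearMap.fst ℝ ℝ ℝ) +
        (fderiv ℝ g p).smulRight (ContinuousLinearMap.snd ℝ ℝ ℝ)) p := fun p =>
    HasFDerivAt.add ((hf p).hasFDerivAt.smul_const (ContinuousLinearMap.fst ℝ ℝ ℝ))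
      ((hg p).hasFDerivAt.smul_const (ContinuousLinearMap.snd ℝ ℝ ℝ))
  obtain ⟨F, hF⟩ := convex_univ.exists_forall_hasFDerivAt_of_fderiv_symmetric isOpen_univ
    (fun p _ => (hω p).differentiableAt.differentiableWithinAt) (by
      rintro p - ⟨x₁, x₂⟩ ⟨y₁, y₂⟩
      have key : ∀ (L : ℝ × ℝ →L[ℝ] ℝ) (s t : ℝ), L (s, t) = s * L (1, 0) + t * L (0, 1) := by
        intro L s t
        have : (s, t) = s • ((1, 0) : ℝ × ℝ) + t • ((0, 1) : ℝ × ℝ) := by simp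
        rw [this, map_add, map_smul, map_smul, smul_eq_mul, smul_eq_mul]
      rw [(hω p).fderiv]
      simp only [add_apply, ContinuousLinearMap.smulRight_apply,
        smul_apply, ContinuousLinearMap.coe_fst', ContinuousLinearMap.coe_snd',
        smul_eq_mul]
      rw [key (fderiv ℝ f p) x₁, key (fderiv ℝ f p) y₁, key (fderiv ℝ g p) x₁,
        key (fderiv ℝ g p) y₁, hfg p]
      ring)
  exact ⟨F, fun p => hF p (mem_univ p)⟩

/-- The vector field `(F, G)` is monotone when its Jacobian matrix `(a b; b c)` is positive definite
(here of determinant one). -/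
theorem gradient_monotone {F G a b c : ℝ × ℝ → ℝ}
    (hF : ∀ p, HasFDerivAt F
      (a p • ContinuousLinearMap.fst ℝ ℝ ℝ + b p • ContinuousLinearMap.snd ℝ ℝ ℝ) p)
    (hG : ∀ p, HasFDerivAt G
      (b p • ContinuousLinearMap.fst ℝ ℝ ℝ + c p • ContinuousLinearMap.snd ℝ ℝ ℝ) p)
    (ha : ∀ p, 0 < a p) (hdet : ∀ p, a p * c p - b p ^ 2 = 1) (p q : ℝ × ℝ) :
    0 ≤ (p.1 - q.1) * (F p - F q) + (p.2 - q.2) * (G p - G q) := by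
  set v : ℝ × ℝ := p - q with hv
  have hline : ∀ t : ℝ, HasDerivAt (fun t : ℝ => q + t • v) v t := fun t => by
    simpa using ((hasDerivAt_id t).smul_const v).const_add q
  have hφ : ∀ t : ℝ, HasDerivAt (fun t : ℝ => v.1 * F (q + t • v) + v.2 * G (q + t • v))
      (v.1 * (a (q + t • v) * v.1 + b (q + t • v) * v.2) +
        v.2 * (b (q + t • v) * v.1 + c (q + t • v) * v.2)) t := fun t =>
    ((((hF _).comp_hasDerivAt t (hline t)).const_mul v.1).add
      (((hG _).comp_hasDerivAt t (hline t)).const_mul v.2)).congr_deriv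
        (by simp)
  have hmono := monotone_of_deriv_nonneg (fun t => (hφ t).differentiableAt) (fun t => by
    rw [(hφ t).deriv]
    generalize q + t • v = r
    have h1 := ha r
    have h2 := hdet r
    -- completing the square: `a * (a x² + 2 b x y + c y²) = (a x + b y)² + y²`
    refine nonneg_of_mul_nonneg_right (a := a r) ?_ h1
    have : a r * (v.1 * (a r * v.1 + b r * v.2) + v.2 * (b r * v.1 + c r * v.2)) =
        (a r * v.1 + b r * v.2) ^ 2 + v.2 ^ 2 := by linear_combination v.2 ^ 2 * h2
    rw [this]
    positivity)
  have := hmono (zero_le_one)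
  simp only [zero_smul, one_smul, add_zero, hv, add_sub_cancel, Prod.fst_sub, Prod.snd_sub] at this
  linarith

/-- Jörgens' theorem for the Hessian: a `C¹` symmetric matrix field `(a b; b c)` on the plane with
closed rows, `a > 0` and determinant one is constant. The constancy of `c` follows from that of
`a` and `b`. -/
theorem jorgens {a b c : ℝ × ℝ → ℝ} (hac : ContDiff ℝ 1 a) (hbc : ContDiff ℝ 1 b)
    (hcc : ContDiff ℝ 1 c)
    (hab : ∀ p, fderiv ℝ a p (0, 1) = fderiv ℝ b p (1, 0))
    (hbc' : ∀ p, fderiv ℝ b p (0, 1) = fderiv ℝ c p (1, 0))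
    (ha : ∀ p, 0 < a p) (hdet : ∀ p, a p * c p - b p ^ 2 = 1) (p q : ℝ × ℝ) :
    a p = a q ∧ b p = b q := by
  obtain ⟨F, hF⟩ := exists_primitive (hac.differentiable one_ne_zero)
    (hbc.differentiable one_ne_zero) hab
  obtain ⟨G, hG⟩ := exists_primitive (hbc.differentiable one_ne_zero)
    (hcc.differentiable one_ne_zero) hbc'
  have hac' := hac.continuous
  have hbc'' := hbc.continuous
  have hcc' := hcc.continuous
  have hFs : ∀ p, HasStrictFDerivAt F _ p := fun p =>
    hasStrictFDerivAt_of_hasFDerivAt_of_continuousAt (Eventually.of_forall hF) (by fun_prop)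
  have hGs : ∀ p, HasStrictFDerivAt G _ p := fun p =>
    hasStrictFDerivAt_of_hasFDerivAt_of_continuousAt (Eventually.of_forall hG) (by fun_prop)
  have hfst : ∀ p : ℝ × ℝ, HasStrictFDerivAt (fun p : ℝ × ℝ => p.1) (ContinuousLinearMap.fst ℝ ℝ ℝ) p :=
    fun p => hasStrictFDerivAt_fst
  have hsnd : ∀ p : ℝ × ℝ, HasStrictFDerivAt (fun p : ℝ × ℝ => p.2) (ContinuousLinearMap.snd ℝ ℝ ℝ) p :=
    fun p => hasStrictFDerivAt_snd
  obtain ⟨e, he_re, he_im⟩ : ∃ e : ℝ × ℝ →L[ℝ] ℂ, (∀ v, (e v).re = v.1) ∧ ∀ v, (e v).im = v.2 :=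
    ⟨(equivRealProdCLM.symm : ℝ × ℝ →L[ℝ] ℂ), fun _ => by simp, fun _ => by simp⟩
  let Ψ : ℝ × ℝ → ℂ := fun p => e (p.1 + F p, p.2 + G p)
  let h : ℝ × ℝ → ℂ := fun p => e (p.1 - F p, -(p.2 - G p))
  have hΨ := fun p => e.hasStrictFDerivAt.comp p (((hfst p).add (hFs p)).prodMk ((hsnd p).add (hGs p)))
  have hh := fun p => e.hasStrictFDerivAt.comp p
    (((hfst p).sub (hFs p)).prodMk ((hsnd p).sub (hGs p)).neg)
  -- `|Ψ p - Ψ q|² = |p - q|² + 2 ⟨p - q, (ΔF, ΔG)⟩ + |(ΔF, ΔG)|²` with a nonnegative middle term;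
  -- the norm on `ℝ × ℝ` is the sup norm, which is at most the Euclidean one.
  have hexp : ∀ p q, ‖p - q‖ ≤ ‖Ψ p - Ψ q‖ := by
    intro p q
    have hm := gradient_monotone hF hG ha hdet p q
    have hsq : ‖Ψ p - Ψ q‖ ^ 2 = ((p.1 - q.1) + (F p - F q)) ^ 2 +
        ((p.2 - q.2) + (G p - G q)) ^ 2 := by
      rw [← normSq_eq_norm_sq, normSq_apply]
      simp only [Ψ, sub_re, sub_im, he_re, he_im]
      ring
    rw [Prod.norm_def, max_le_iff, Real.norm_eq_abs, Real.norm_eq_abs]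
    constructor <;> refine abs_le_of_sq_le_sq ?_ (norm_nonneg _) <;>
      simp only [Prod.fst_sub, Prod.snd_sub] <;> rw [hsq] <;>
      nlinarith [sq_nonneg (F p - F q), sq_nonneg (G p - G q), sq_nonneg (p.1 - q.1),
        sq_nonneg (p.2 - q.2)]
  have hanti : AntilipschitzWith 1 Ψ := AntilipschitzWith.of_le_mul_dist (by
    simpa [dist_eq_norm] using hexp)
  have hcont : Continuous Ψ := continuous_iff_continuousAt.2 fun p => (hΨ p).hasFDerivAt.continuousAt
  have hopen : IsOpenMap Ψ := by
    refine IsOpenMap.of_nhds_le fun p => ?_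
    have hs : HasStrictFDerivAt Ψ _ p := hΨ p
    refine (hs.map_nhds_eq_of_surj ?_).ge
    rw [LinearMap.range_eq_top]
    intro z
    have h1 := ha p
    have h2 := hdet p
    have h0 : 2 + a p + c p ≠ 0 := by
      have : 0 < c p := by by_contra! hc; nlinarith [sq_nonneg (b p)]
      positivity
    -- Cramer's rule; the determinant is `(1 + a)(1 + c) - b² = 2 + a + c`
    refine ⟨(((1 + c p) * z.re - b p * z.im) / (2 + a p + c p),
      ((1 + a p) * z.im - b p * z.re) / (2 + a p + c p)), ?_⟩
    apply Complex.ext <;> simp [he_re, he_im] <;> field_simp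
    · linear_combination z.re * h2
    · linear_combination z.im * h2
  have hclosed : IsClosed (range Ψ) := by
    have hproper : IsProperMap Ψ := isProperMap_iff_tendsto_cocompact.2 ⟨hcont, by
      simpa [← Metric.cobounded_eq_cocompact] using hanti.tendsto_cobounded⟩
    exact hproper.isClosedMap.isClosed_range
  have hsurj : Function.Surjective Ψ := range_eq_univ.1 <|
    (IsClopen.eq_univ ⟨hclosed, hopen.isOpen_range⟩ (range_nonempty Ψ))
  have hinj : Function.Injective Ψ := hanti.injective
  obtain ⟨Θ, hΘ⟩ := hsurj.hasRightInverse
  have hΘ' : ∀ p, Θ (Ψ p) = p := fun p => hinj (hΘ _)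
  have hden : ∀ p, ((1 + a p : ℝ) + b p * I : ℂ) ≠ 0 := fun p hp => by
    have := congrArg re hp
    have h1 := ha p
    simp at this
    linarith
  let μ : ℝ × ℝ → ℂ := fun p => ((1 - a p : ℝ) + b p * I) / ((1 + a p : ℝ) + b p * I)
  have hderiv : ∀ p, HasDerivAt (h ∘ Θ) (μ p) (Ψ p) := by
    intro p
    -- Since `dh = μ dΨ`, the function `h - μ(p) Ψ` is `o(|x - p|)` up to a constant, hence
    -- `o(|Ψ x - Ψ p|)` because `Ψ` is expanding.
    have h0 : HasFDerivAt (fun x => h x - μ p * Ψ x) (0 : ℝ × ℝ →L[ℝ] ℂ) p := by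
      refine ((hh p).hasFDerivAt.sub ((hΨ p).hasFDerivAt.const_mul (μ p))).congr_fderiv ?_
      have hμp : μ p * ((1 + a p : ℝ) + b p * I) = (1 - a p : ℝ) + b p * I :=
        div_mul_cancel₀ _ (hden p)
      have hre := congrArg re hμp
      have him := congrArg im hμp
      generalize μ p = m at hre him
      have h2 := hdet p
      simp at hre him
      ext <;> apply Complex.ext <;> simp [he_re, he_im]
      · linarith
      · linarith
      · refine mul_left_cancel₀ (ha p).ne' ?_
        linear_combination -b p * hre + him + m.im * h2
      · refine mul_left_cancel₀ (ha p).ne' ?_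
        linear_combination -hre - b p * him - (m.re - 1) * h2
    rw [hasDerivAt_iff_isLittleO]
    rw [hasFDerivAt_iff_isLittleO] at h0
    have hΘc : Tendsto Θ (𝓝 (Ψ p)) (𝓝 p) := by
      simpa [hΘ'] using (hanti.to_rightInverse hΘ).continuous.tendsto (Ψ p)
    have h3 := h0.comp_tendsto hΘc
    refine (h3.trans_isBigO (Asymptotics.IsBigO.of_bound 1 (Eventually.of_forall fun z => ?_))).congr_left ?_
    · have := hexp (Θ z) p
      rw [hΘ z] at this
      simpa using this
    · intro z
      simp [hΘ z, hΘ']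
      ring
  have hdiff : Differentiable ℂ (h ∘ Θ) := fun z => by
    have := hderiv (Θ z)
    rw [hΘ z] at this
    exact this.differentiableAt
  have hdd : ∀ p, deriv (h ∘ Θ) (Ψ p) = μ p := fun p => (hderiv p).deriv
  have hbound : Bornology.IsBounded (range (deriv (h ∘ Θ))) := by
    refine (Metric.isBounded_closedBall (x := (0 : ℂ)) (r := 1)).subset ?_
    rintro _ ⟨z, rfl⟩
    obtain ⟨p, rfl⟩ := hsurj z
    rw [hdd, mem_closedBall_zero_iff, norm_div, div_le_one (norm_pos_iff.2 (hden p))]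
    refine abs_le_of_sq_le_sq' ?_ (norm_nonneg _) |>.2
    rw [← normSq_eq_norm_sq, ← normSq_eq_norm_sq, normSq_add_mul_I, normSq_add_mul_I]
    nlinarith [ha p]
  have hμ : μ p = μ q := by
    rw [← hdd, ← hdd]
    exact hdiff.deriv.apply_eq_apply_of_bounded hbound _ _
  rw [div_eq_div_iff (hden p) (hden q)] at hμ
  have hre := congrArg re hμ
  have him := congrArg im hμ
  simp at hre him
  have hapq : a p = a q := by linarith
  refine ⟨hapq, ?_⟩
  rw [hapq] at him
  have : a q * (b p - b q) = 0 := by linarith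
  rcases mul_eq_zero.1 this with h | h
  · exact absurd h (ha q).ne'
  · linarith

theorem fderiv_div_sqrt {N p q : ℝ × ℝ → ℝ} {N' : ℝ × ℝ →L[ℝ] ℝ} {z : ℝ × ℝ}
    (hN : HasFDerivAt N N' z) (hp : DifferentiableAt ℝ p z) (hq : DifferentiableAt ℝ q z)
    (hpq : 0 < 1 - p z ^ 2 - q z ^ 2) (v : ℝ × ℝ) :
    fderiv ℝ (fun z => N z / √(1 - p z ^ 2 - q z ^ 2)) z v =
      (N' v * (1 - p z ^ 2 - q z ^ 2) + N z * (p z * fderiv ℝ p z v + q z * fderiv ℝ q z v)) /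
        √(1 - p z ^ 2 - q z ^ 2) ^ 3 := by
  have hw := Real.sqrt_pos.2 hpq
  have hw2 := Real.sq_sqrt hpq.le
  have hin : HasFDerivAt (fun z => 1 - p z ^ 2 - q z ^ 2) _ z :=
    ((hp.hasFDerivAt.pow 2).const_sub 1).sub (hq.hasFDerivAt.pow 2)
  have hsqrt : HasDerivAt (fun x => (√x)⁻¹) _ (1 - p z ^ 2 - q z ^ 2) :=
    (Real.hasDerivAt_sqrt hpq.ne').inv hw.ne'
  have hinv : HasFDerivAt (fun z => (√(1 - p z ^ 2 - q z ^ 2))⁻¹) _ z :=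
    hsqrt.comp_hasFDerivAt (f := fun z => 1 - p z ^ 2 - q z ^ 2) z hin
  have hd : HasFDerivAt (fun z => N z / √(1 - p z ^ 2 - q z ^ 2)) _ z := hN.mul hinv
  rw [hd.fderiv]
  simp
  generalize √(1 - p z ^ 2 - q z ^ 2) = w at hw hw2 ⊢
  rw [← hw2]
  field_simp
  ring

/-- The maximal surface equation makes the rows of `W⁻¹ (1 - p², -pq; -pq, 1 - q²)` closed: the
curl of each row is `p` or `q` times the equation, up to sign and a factor `W⁻³`. -/
theorem closed_of_maximal {p q : ℝ × ℝ → ℝ} (hp : Differentiable ℝ p) (hq : Differentiable ℝ q)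
    (hpq : ∀ z, 0 < 1 - p z ^ 2 - q z ^ 2)
    (hsymm : ∀ z, fderiv ℝ p z (0, 1) = fderiv ℝ q z (1, 0))
    (hmax : ∀ z, (1 - q z ^ 2) * fderiv ℝ p z (1, 0) + 2 * p z * q z * fderiv ℝ q z (1, 0) +
      (1 - p z ^ 2) * fderiv ℝ q z (0, 1) = 0) (z : ℝ × ℝ) :
    fderiv ℝ (fun z => (1 - p z ^ 2) / √(1 - p z ^ 2 - q z ^ 2)) z (0, 1) =
      fderiv ℝ (fun z => -(p z * q z) / √(1 - p z ^ 2 - q z ^ 2)) z (1, 0) ∧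
    fderiv ℝ (fun z => -(p z * q z) / √(1 - p z ^ 2 - q z ^ 2)) z (0, 1) =
      fderiv ℝ (fun z => (1 - q z ^ 2) / √(1 - p z ^ 2 - q z ^ 2)) z (1, 0) := by
  have dp := (hp z).hasFDerivAt
  have dq := (hq z).hasFDerivAt
  have da : HasFDerivAt (fun z => 1 - p z ^ 2) _ z := (dp.pow 2).const_sub 1
  have db : HasFDerivAt (fun z => -(p z * q z)) _ z := (dp.mul dq).neg
  have dc : HasFDerivAt (fun z => 1 - q z ^ 2) _ z := (dq.pow 2).const_sub 1
  have hs := hsymm z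
  have hm := hmax z
  rw [fderiv_div_sqrt da (hp z) (hq z) (hpq z), fderiv_div_sqrt db (hp z) (hq z) (hpq z),
    fderiv_div_sqrt db (hp z) (hq z) (hpq z), fderiv_div_sqrt dc (hp z) (hq z) (hpq z)]
  simp [hs]
  constructor <;> congr 1
  · linear_combination q z * hm
  · linear_combination -p z * hm

theorem eq_of_sq_eq {f : ℝ × ℝ → ℝ} (hf : Continuous f) (h : ∀ z w, f z ^ 2 = f w ^ 2)
    (z w : ℝ × ℝ) : f z = f w := by
  by_cases h0 : f w = 0
  · have := h z w
    rw [h0] at this ⊢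
    simpa using this
  · rcases isPreconnected_univ.eq_or_eq_neg_of_sq_eq (f := f) (g := fun _ => f w)
      hf.continuousOn continuousOn_const (fun x _ => h x w) (fun _ => h0) with h1 | h1
    · exact h1 (mem_univ z)
    · have := h1 (mem_univ w)
      simp at this
      exact absurd (by linarith) h0

theorem maximal_gradient_const {p q : ℝ × ℝ → ℝ} (hp : ContDiff ℝ 1 p) (hq : ContDiff ℝ 1 q)
    (hpq : ∀ z, 0 < 1 - p z ^ 2 - q z ^ 2)
    (hsymm : ∀ z, fderiv ℝ p z (0, 1) = fderiv ℝ q z (1, 0))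
    (hmax : ∀ z, (1 - q z ^ 2) * fderiv ℝ p z (1, 0) + 2 * p z * q z * fderiv ℝ q z (1, 0) +
      (1 - p z ^ 2) * fderiv ℝ q z (0, 1) = 0) :
    (∀ z w, p z = p w) ∧ ∀ z w, q z = q w := by
  have hcl := closed_of_maximal (hp.differentiable one_ne_zero) (hq.differentiable one_ne_zero)
    hpq hsymm hmax
  have hw := fun z => Real.sqrt_pos.2 (hpq z)
  have hw2 := fun z => Real.sq_sqrt (hpq z).le
  have hWs : ContDiff ℝ 1 fun z => √(1 - p z ^ 2 - q z ^ 2) :=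
    ((contDiff_const.sub (hp.pow 2)).sub (hq.pow 2)).sqrt fun z => (hpq z).ne'
  have hdet : ∀ z, (1 - p z ^ 2) / √(1 - p z ^ 2 - q z ^ 2) *
      ((1 - q z ^ 2) / √(1 - p z ^ 2 - q z ^ 2)) -
      (-(p z * q z) / √(1 - p z ^ 2 - q z ^ 2)) ^ 2 = 1 := fun z => by
    have h1 := hw z
    have h2 := hw2 z
    field_simp
    linear_combination -h2
  have ha : ∀ z, 0 < (1 - p z ^ 2) / √(1 - p z ^ 2 - q z ^ 2) := fun z =>
    div_pos (by nlinarith [hpq z, sq_nonneg (q z)]) (hw z)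
  have hJ := jorgens (a := fun z => (1 - p z ^ 2) / √(1 - p z ^ 2 - q z ^ 2))
    (b := fun z => -(p z * q z) / √(1 - p z ^ 2 - q z ^ 2))
    (c := fun z => (1 - q z ^ 2) / √(1 - p z ^ 2 - q z ^ 2))
    ((contDiff_const.sub (hp.pow 2)).div hWs fun z => (hw z).ne')
    ((hp.mul hq).neg.div hWs fun z => (hw z).ne')
    ((contDiff_const.sub (hq.pow 2)).div hWs fun z => (hw z).ne')
    (fun z => (hcl z).1) (fun z => (hcl z).2) ha hdet
  have hsq : ∀ z w, p z ^ 2 = p w ^ 2 ∧ q z ^ 2 = q w ^ 2 := by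
    intro z w
    obtain ⟨h1, h2⟩ := hJ z w
    have d1 := hdet z
    have d2 := hdet w
    have ea := ha w
    rw [h1, h2] at d1
    -- equality of `a` and `b` at the two points forces that of `c`, by the determinant
    have h3 := mul_left_cancel₀ ea.ne' ((sub_left_inj.1 (d1.trans d2.symm)))
    have hz := hw z
    have hz2 := hw2 z
    have hv := hw w
    have hv2 := hw2 w
    generalize √(1 - p z ^ 2 - q z ^ 2) = s at *
    generalize √(1 - p w ^ 2 - q w ^ 2) = t at *
    rw [div_eq_div_iff hz.ne' hv.ne'] at h1 h3
    -- the traces agree, and the trace is `a + c = W + 1 / W`: thus `s + 1 / s = t + 1 / t`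
    have htr : (s - t) * (1 - s * t) = 0 := by
      linear_combination -h1 - h3 - t * hz2 + s * hv2
    have hst : s = t := by
      rcases mul_eq_zero.1 htr with h | h
      · linarith
      -- `W ≤ 1`, so `s t = 1` only for `s = t = 1`
      · have hs1 : s ≤ 1 := by nlinarith [sq_nonneg (p z), sq_nonneg (q z)]
        have ht1 : t ≤ 1 := by nlinarith [sq_nonneg (p w), sq_nonneg (q w)]
        nlinarith
    subst hst
    constructor
    · have := mul_right_cancel₀ hz.ne' h1
      linarith
    · have := mul_right_cancel₀ hz.ne' h3
      linarith
  exact ⟨eq_of_sq_eq hp.continuous fun z w => (hsq z w).1,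
    eq_of_sq_eq hq.continuous fun z w => (hsq z w).2⟩

theorem stmt_2 (u : ℝ × ℝ → ℝ) (hu : ContDiff ℝ 2 u)
    (hsp : ∀ p : ℝ × ℝ,
      (fderiv ℝ u p (1, 0)) ^ 2 + (fderiv ℝ u p (0, 1)) ^ 2 < 1)
    (hmax : ∀ p : ℝ × ℝ,
      (1 - (fderiv ℝ u p (0, 1)) ^ 2) *
          fderiv ℝ (fun q => fderiv ℝ u q (1, 0)) p (1, 0) +
        2 * (fderiv ℝ u p (1, 0)) * (fderiv ℝ u p (0, 1)) *
          fderiv ℝ (fun q => fderiv ℝ u q (0, 1)) p (1, 0) +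
        (1 - (fderiv ℝ u p (1, 0)) ^ 2) *
          fderiv ℝ (fun q => fderiv ℝ u q (0, 1)) p (0, 1) = 0) :
    ∃ a b c : ℝ, a ^ 2 + b ^ 2 < 1 ∧
      ∀ x y : ℝ, u (x, y) = a * x + b * y + c := by
  have hdu : ContDiff ℝ 1 (fderiv ℝ u) := hu.fderiv_right (by norm_num)
  have hC : ∀ v : ℝ × ℝ, ContDiff ℝ 1 fun q => fderiv ℝ u q v := fun v =>
    hdu.clm_apply contDiff_const
  have hD : ∀ z v w : ℝ × ℝ, fderiv ℝ (fun q => fderiv ℝ u q v) z w =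
      fderiv ℝ (fderiv ℝ u) z w v := fun z v w => by
    rw [fderiv_clm_apply ((hdu.differentiable one_ne_zero) z) (differentiableAt_const v)]
    simp
  have hsymm : ∀ z, fderiv ℝ (fun q => fderiv ℝ u q (1, 0)) z (0, 1) =
      fderiv ℝ (fun q => fderiv ℝ u q (0, 1)) z (1, 0) := fun z => by
    rw [hD, hD]
    exact (hu.contDiffAt.isSymmSndFDerivAt (by simp)) _ _
  obtain ⟨h1, h2⟩ := maximal_gradient_const (hC (1, 0)) (hC (0, 1)) (fun z => by linarith [hsp z])
    hsymm hmax
  have hf : ∀ z, fderiv ℝ u z = fderiv ℝ u 0 := fun z => by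
    ext
    · simpa using h1 z 0
    · simpa using h2 z 0
  refine ⟨fderiv ℝ u 0 (1, 0), fderiv ℝ u 0 (0, 1), u 0, hsp 0, fun x y => ?_⟩
  have hud := hu.differentiable two_ne_zero
  have hconst := is_const_of_fderiv_eq_zero (𝕜 := ℝ) (f := fun z => u z - fderiv ℝ u 0 z)
    (hud.sub (fderiv ℝ u 0).differentiable) (fun z => by
      rw [fderiv_fun_sub (hud z) (fderiv ℝ u 0).differentiableAt, ContinuousLinearMap.fderiv,
        hf z, sub_self]) (x, y) 0
  have hxy : ((x, y) : ℝ × ℝ) = x • ((1, 0) : ℝ × ℝ) + y • ((0, 1) : ℝ × ℝ) := by simp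
  have hL : fderiv ℝ u 0 (x, y) = x * fderiv ℝ u 0 (1, 0) + y * fderiv ℝ u 0 (0, 1) := by
    rw [hxy, map_add, map_smul, map_smul, smul_eq_mul, smul_eq_mul]
  simp only [map_zero, sub_zero, hL] at hconst
  linarith
end

section
/- Let M be a metric space with base point x₀, write r(x) = dist(x₀, x), and let x ∈ M with ℓ = r(x). Suppose there exists a minimizing geodesic γ : [0, ℓ] → M from x₀ to x, and let t ∈ ℝ with |t| ≤ ℓ. Then the infimum, over all pairs (y, s) ∈ M × ℝ with |s| = r(y), of √(dist(x, y)² + (t − s)²) equals (ℓ − |t|)/√2. -/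
/-!
Lower bound: if `|s| = dist x₀ y`, the triangle inequalities in `M` and in `ℝ` give
`ℓ - |t| ≤ dist x y + |s| - |t| ≤ dist x y + |t - s|`, and `(a + b)² ≤ 2 (a² + b²)` bounds the
right-hand side by `√2` times the product distance.

The bound is attained, with both inequalities sharp, at the point `γ ((ℓ + |t|) / 2)` of the
geodesic, at height `±(ℓ + |t|) / 2`: there `dist x y = |t - s| = (ℓ - |t|) / 2`.
-/


/-- equation (dist1) in the proof of Proposition 4.1.
If `x ∈ M` with `ℓ = dist x₀ x` is joined to `x₀` by a minimizing geodesic and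
`|t| ≤ ℓ`, then the distance in `M × ℝ` (with the product distance
`√(dist(x,y)² + (t-s)²)`) from `(x, t)` to the cone boundary
`{(y, s) : |s| = dist x₀ y}` equals `(ℓ - |t|)/√2`. -/
theorem stmt_3 {M : Type*} [MetricSpace M] (x₀ x : M) (ℓ : ℝ)
    (hℓ : ℓ = dist x₀ x)
    (hgeo : ∃ γ : ℝ → M, γ 0 = x₀ ∧ γ ℓ = x ∧
      ∀ s ∈ Set.Icc (0:ℝ) ℓ, ∀ s' ∈ Set.Icc (0:ℝ) ℓ,
        dist (γ s) (γ s') = |s - s'|)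
    (t : ℝ) (ht : |t| ≤ ℓ) :
    sInf {d : ℝ | ∃ y : M, ∃ s : ℝ, |s| = dist x₀ y ∧
        d = Real.sqrt (dist x y ^ 2 + (t - s) ^ 2)} =
      (ℓ - |t|) / Real.sqrt 2 := by
  obtain ⟨γ, h0, hl, hγ⟩ := hgeo
  have hℓ0 : 0 ≤ ℓ := hℓ ▸ dist_nonneg
  have h2 : (0:ℝ) < Real.sqrt 2 := by positivity
  have h2sq : Real.sqrt 2 ^ 2 = 2 := Real.sq_sqrt (by norm_num)
  have ht0 := abs_nonneg t
  refine IsLeast.csInf_eq ⟨?_, ?_⟩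
  · have hm : (ℓ + |t|) / 2 ∈ Set.Icc (0:ℝ) ℓ := ⟨by linarith, by linarith⟩
    have hx : dist x (γ ((ℓ + |t|) / 2)) = (ℓ - |t|) / 2 := by
      rw [← hl, hγ ℓ ⟨hℓ0, le_rfl⟩ _ hm, abs_of_nonneg (by linarith)]
      ring
    have hr : dist x₀ (γ ((ℓ + |t|) / 2)) = (ℓ + |t|) / 2 := by
      rw [← h0, hγ 0 ⟨le_rfl, hℓ0⟩ _ hm, zero_sub, abs_neg, abs_of_nonneg hm.1]
    -- The height is `±(ℓ + |t|) / 2`, with the sign of `t`.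
    obtain ⟨s, hs, hts⟩ : ∃ s : ℝ, |s| = (ℓ + |t|) / 2 ∧
        (t - s) ^ 2 = ((ℓ - |t|) / 2) ^ 2 := by
      rcases le_total 0 t with h | h
      · refine ⟨(ℓ + |t|) / 2, abs_of_nonneg hm.1, ?_⟩
        rw [abs_of_nonneg h]
        ring
      · refine ⟨-((ℓ + |t|) / 2), by rw [abs_neg, abs_of_nonneg hm.1], ?_⟩
        rw [abs_of_nonpos h]
        ring
    refine ⟨γ ((ℓ + |t|) / 2), s, by rw [hs, hr], ?_⟩
    rw [hx, hts, eq_comm, Real.sqrt_eq_iff_mul_self_eq (by positivity)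
      (div_nonneg (by linarith) h2.le), ← sq, div_pow _ (Real.sqrt 2), h2sq]
    ring
  · rintro d ⟨y, s, hs, rfl⟩
    have htri : ℓ ≤ dist x₀ y + dist x y := by
      rw [hℓ, dist_comm x y]
      exact dist_triangle x₀ y x
    have hst : |s| - |t| ≤ |t - s| := by
      rw [abs_sub_comm]
      exact abs_sub_abs_le_abs_sub s t
    apply Real.le_sqrt_of_sq_le
    rw [div_pow, h2sq, ← sq_abs (t - s)]
    have hsum : (ℓ - |t|) ^ 2 ≤ (dist x y + |t - s|) ^ 2 :=
      pow_le_pow_left₀ (by linarith) (by linarith) 2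
    linarith [add_sq_le (a := dist x y) (b := |t - s|)]
end

section
/- Let M be a metric space with base point x₀, write r(x) = dist(x₀, x), and let x ∈ M with ℓ = r(x) > 0. Suppose there exists a minimizing geodesic γ : [0, ℓ] → M from x₀ to x, and let t ∈ ℝ with |t| ≤ ℓ. Then the infimum over y ∈ M of √(dist(x, y)² + (t − r(y))²) equals (ℓ − t)/√2, and it is attained at the point y = γ((ℓ + t)/2). -/
/-!
Put `a = dist x y` and `b = dist x₀ y - t`. The triangle inequality gives `a + b ≥ ℓ - t ≥ 0`, and
`2 (a² + b²) ≥ (a + b)²` turns this into the lower bound `√(a² + b²) ≥ (ℓ - t)/√2`. Both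
inequalities are equalities when `y` lies on the geodesic and `a = b`, that is, at
`y = γ ((ℓ + t)/2)`.
-/

/-- equation (dist4) in the proof of Proposition 4.1.
If `x ∈ M` with `ℓ = dist x₀ x > 0` is joined to `x₀` by a minimizing geodesic
`γ` and `|t| ≤ ℓ`, then `⨅ y, √(dist(x,y)² + (t - r(y))²) = (ℓ - t)/√2`, and
this infimum is attained at `y = γ ((ℓ + t)/2)`. -/
theorem stmt_4 {M : Type*} [MetricSpace M] (x₀ x : M) (ℓ : ℝ)
    (hℓ : ℓ = dist x₀ x) (hℓpos : 0 < ℓ)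
    (γ : ℝ → M) (hγ0 : γ 0 = x₀) (hγℓ : γ ℓ = x)
    (hγ : ∀ s ∈ Set.Icc (0:ℝ) ℓ, ∀ s' ∈ Set.Icc (0:ℝ) ℓ,
      dist (γ s) (γ s') = |s - s'|)
    (t : ℝ) (ht : |t| ≤ ℓ) :
    (⨅ y : M, Real.sqrt (dist x y ^ 2 + (t - dist x₀ y) ^ 2)) =
        (ℓ - t) / Real.sqrt 2 ∧
      Real.sqrt (dist x (γ ((ℓ + t) / 2)) ^ 2 +
          (t - dist x₀ (γ ((ℓ + t) / 2))) ^ 2) =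
        (ℓ - t) / Real.sqrt 2 := by
  obtain ⟨ht1, ht2⟩ := abs_le.mp ht
  have hval : (ℓ - t) / Real.sqrt 2 = Real.sqrt ((ℓ - t) ^ 2 / 2) := by
    rw [Real.sqrt_div (sq_nonneg _), Real.sqrt_sq (by linarith)]
  have hs : (ℓ + t) / 2 ∈ Set.Icc (0 : ℝ) ℓ := ⟨by linarith, by linarith⟩
  have hx : dist x (γ ((ℓ + t) / 2)) = (ℓ - t) / 2 := by
    have h := hγ ℓ ⟨hℓpos.le, le_rfl⟩ _ hs
    rw [hγℓ, abs_of_nonneg (by linarith)] at h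
    linarith
  have hx₀ : dist x₀ (γ ((ℓ + t) / 2)) = (ℓ + t) / 2 := by
    have h := hγ 0 ⟨le_rfl, hℓpos.le⟩ _ hs
    rw [hγ0, abs_of_nonpos (by linarith)] at h
    linarith
  have hmin : Real.sqrt (dist x (γ ((ℓ + t) / 2)) ^ 2 +
      (t - dist x₀ (γ ((ℓ + t) / 2))) ^ 2) = (ℓ - t) / Real.sqrt 2 := by
    rw [hx, hx₀, hval]
    congr 1
    ring
  have hlow : ∀ y : M, (ℓ - t) / Real.sqrt 2 ≤
      Real.sqrt (dist x y ^ 2 + (t - dist x₀ y) ^ 2) := by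
    intro y
    rw [hval]
    apply Real.sqrt_le_sqrt
    have htri := dist_triangle_right x₀ x y
    have hsq : (ℓ - t) ^ 2 ≤ (dist x y + (dist x₀ y - t)) ^ 2 :=
      pow_le_pow_left₀ (by linarith) (by linarith) 2
    nlinarith [sq_nonneg (dist x y - (dist x₀ y - t))]
  have : Nonempty M := ⟨x⟩
  refine ⟨le_antisymm ?_ (le_ciInf hlow), hmin⟩
  rw [← hmin]
  exact ciInf_le (f := fun y : M => Real.sqrt (dist x y ^ 2 + (t - dist x₀ y) ^ 2))
    ⟨_, Set.forall_mem_range.mpr hlow⟩ (γ ((ℓ + t) / 2))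
end

section
/- Let M be a metric space with base point x₀, write r(x) = dist(x₀, x), and let x ∈ M with ℓ = r(x) > 0. Suppose there exists a minimizing geodesic γ : [0, ℓ] → M from x₀ to x, and let t ∈ ℝ with |t| ≤ ℓ. Then the infimum over y ∈ M of √(dist(x, y)² + (t + r(y))²) equals (ℓ + t)/√2, and it is attained at the point y = γ((ℓ − t)/2). -/
/-!
With `a = dist x y` and `b = t + r(y)`, the triangle inequality gives `a + b ≥ ℓ + t ≥ 0`, so
`a² + b² ≥ (a + b)² / 2 ≥ (ℓ + t)² / 2`. Equality needs `a = b` and `y` on a geodesic from `x₀`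
to `x`, which holds at `y = γ ((ℓ - t) / 2)`, where `a = b = (ℓ + t) / 2`.
-/

/-- equation (dist5) in the proof of Proposition 4.1.
If `x ∈ M` with `ℓ = dist x₀ x > 0` is joined to `x₀` by a minimizing geodesic
`γ` and `|t| ≤ ℓ`, then `⨅ y, √(dist(x,y)² + (t + r(y))²) = (ℓ + t)/√2`, and
this infimum is attained at `y = γ ((ℓ - t)/2)`. -/
theorem stmt_5 {M : Type*} [MetricSpace M] (x₀ x : M) (ℓ : ℝ)
    (hℓ : ℓ = dist x₀ x) (hℓpos : 0 < ℓ)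
    (γ : ℝ → M) (hγ0 : γ 0 = x₀) (hγℓ : γ ℓ = x)
    (hγ : ∀ s ∈ Set.Icc (0:ℝ) ℓ, ∀ s' ∈ Set.Icc (0:ℝ) ℓ,
      dist (γ s) (γ s') = |s - s'|)
    (t : ℝ) (ht : |t| ≤ ℓ) :
    (⨅ y : M, Real.sqrt (dist x y ^ 2 + (t + dist x₀ y) ^ 2)) =
        (ℓ + t) / Real.sqrt 2 ∧
      Real.sqrt (dist x (γ ((ℓ - t) / 2)) ^ 2 +
          (t + dist x₀ (γ ((ℓ - t) / 2))) ^ 2) =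
        (ℓ + t) / Real.sqrt 2 := by
  have ⟨h1, h2⟩ := abs_le.mp ht
  have hmid : (ℓ - t) / 2 ∈ Set.Icc (0:ℝ) ℓ := ⟨by linarith, by linarith⟩
  have hdx : dist x (γ ((ℓ - t) / 2)) = (ℓ + t) / 2 := by
    have h := hγ ℓ ⟨hℓpos.le, le_rfl⟩ _ hmid
    rw [hγℓ, abs_of_nonneg (by linarith)] at h
    linarith
  have hd0 : dist x₀ (γ ((ℓ - t) / 2)) = (ℓ - t) / 2 := by
    have h := hγ 0 ⟨le_rfl, hℓpos.le⟩ _ hmid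
    rw [hγ0, abs_of_nonpos (by linarith)] at h
    linarith
  have hval : (ℓ + t) / Real.sqrt 2 = Real.sqrt ((ℓ + t) ^ 2 / 2) := by
    rw [Real.sqrt_div (sq_nonneg _), Real.sqrt_sq (by linarith)]
  have hatt : Real.sqrt (dist x (γ ((ℓ - t) / 2)) ^ 2 +
      (t + dist x₀ (γ ((ℓ - t) / 2))) ^ 2) = (ℓ + t) / Real.sqrt 2 := by
    rw [hdx, hd0, hval]
    congr 1
    ring
  have hlow : ∀ y : M, (ℓ + t) / Real.sqrt 2 ≤
      Real.sqrt (dist x y ^ 2 + (t + dist x₀ y) ^ 2) := by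
    intro y
    rw [hval]
    apply Real.sqrt_le_sqrt
    have htri : ℓ + t ≤ dist x y + (t + dist x₀ y) := by
      have h := dist_triangle_right x₀ x y
      linarith
    have hsq := pow_le_pow_left₀ (by linarith : 0 ≤ ℓ + t) htri 2
    nlinarith [sq_nonneg (dist x y - (t + dist x₀ y))]
  have hleast : IsLeast (Set.range fun y : M =>
      Real.sqrt (dist x y ^ 2 + (t + dist x₀ y) ^ 2)) ((ℓ + t) / Real.sqrt 2) :=
    ⟨⟨_, hatt⟩, Set.forall_mem_range.2 hlow⟩
  exact ⟨hleast.csInf_eq, hatt⟩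
end

section
/- Let M be a metric space with base point x₀ and write r(x) = dist(x₀, x). Then for all x, y ∈ M and every t ∈ ℝ with t ≥ −r(x), one has dist(x, y)² + (t − r(y))² ≥ (r(x) − t)²/2. -/
/-- key lower-bound inequality for (dist4), Proposition 4.1.
For all `x y : M` and `t ≥ -dist x₀ x`,
`dist(x,y)² + (t - dist x₀ y)² ≥ (dist x₀ x - t)²/2`. -/
theorem stmt_6 {M : Type*} [MetricSpace M] (x₀ : M) (x y : M) (t : ℝ)
    (ht : -dist x₀ x ≤ t) :
    (dist x₀ x - t) ^ 2 / 2 ≤ dist x y ^ 2 + (t - dist x₀ y) ^ 2 := by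
  have h : (dist x₀ x - dist x₀ y) ^ 2 ≤ dist x y ^ 2 := by
    rw [sq_le_sq, abs_of_nonneg (dist_nonneg (x := x) (y := y)), dist_comm x₀ x, dist_comm x₀ y]
    exact abs_dist_sub_le x y x₀
  -- With `r = dist x₀ x` and `s = dist x₀ y`, the identity
  -- `2 (r - s)² + 2 (t - s)² = (r - t)² + (r + t - 2 s)²` gives the factor `1/2`.
  nlinarith [sq_nonneg (dist x₀ x + t - 2 * dist x₀ y)]
end

section
/- Let M be a metric space with base point x₀, write r(x) = dist(x₀, x), and let γ : [0, ℓ] → M (with ℓ > 0) be a minimizing geodesic from x₀ to a point x with r(x) = ℓ. Let v : [0, ℓ] → ℝ be differentiable with −1 < v'(s) < 1 for all s and v(0) = 0. Then the function s ↦ s − |v(s)| is strictly increasing on [0, ℓ]; consequently, for every s ∈ (0, ℓ], the quantity inf{√(dist(γ(s), y)² + (v(s) − w)²) : (y, w) ∈ M × ℝ, |w| = r(y)} equals (s − |v(s)|)/√2, is strictly positive, and is a strictly increasing function of s on (0, ℓ]. -/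
/-!
Applying the mean value theorem to `v` makes it strictly 1-Lipschitz on `[0, ℓ]`, so `s - |v s|`
is strictly increasing, and it is positive for `s > 0` because it vanishes at `0`.

For the distance to the cone boundary, let `(y, w)` satisfy `|w| = r(y)`. The triangle inequality
gives `dist (γ s) y ≥ s - |w|`, while `|v s - w| ≥ |w| - |v s|`, so the two distances add up to at
least `s - |v s|`; since `a ^ 2 + b ^ 2 ≥ (a + b) ^ 2 / 2`, the product distance is at least
`(s - |v s|) / √2`. Equality holds at `y = γ t`, `w = ± t` with `t = (s + |v s|) / 2` and the sign
of `v s`, where both distances equal `(s - |v s|) / 2`. The infimum is therefore a minimum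
(`isLeast_coneDist`).
-/

/-- A function on `[0, ℓ]` with derivative in `(-1, 1)` is strictly 1-Lipschitz. -/
lemma abs_sub_lt_of_deriv_lt_one {ℓ : ℝ} {v v' : ℝ → ℝ}
    (hv : ∀ s ∈ Set.Icc (0:ℝ) ℓ, HasDerivWithinAt v (v' s) (Set.Icc (0:ℝ) ℓ) s)
    (hv' : ∀ s ∈ Set.Icc (0:ℝ) ℓ, -1 < v' s ∧ v' s < 1)
    {a b : ℝ} (ha : 0 ≤ a) (hab : a < b) (hb : b ≤ ℓ) : |v b - v a| < b - a := by
  obtain ⟨c, hc, h⟩ := exists_hasDerivAt_eq_slope v v' hab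
    (fun x hx => ((hv x ⟨ha.trans hx.1, hx.2.trans hb⟩).continuousWithinAt).mono
      (Set.Icc_subset_Icc ha hb))
    (fun x hx => (hv x ⟨(ha.trans_lt hx.1).le, (hx.2.trans_le hb).le⟩).hasDerivAt
      (Icc_mem_nhds (ha.trans_lt hx.1) (hx.2.trans_le hb)))
  have hpos : 0 < b - a := sub_pos.2 hab
  obtain ⟨h1, h2⟩ := hv' c ⟨(ha.trans_lt hc.1).le, (hc.2.trans_le hb).le⟩
  rw [h] at h1 h2
  rw [lt_div_iff₀ hpos] at h1
  rw [div_lt_iff₀ hpos] at h2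
  rw [abs_lt]
  constructor <;> linarith

/-- The product distance from `(γ s, p)`, with `|p| ≤ s`, to the cone boundary
`{(y, w) : |w| = dist x₀ y}` is attained and equals `(s - |p|) / √2`. -/
lemma isLeast_coneDist {M : Type*} [MetricSpace M] {x₀ : M} {ℓ : ℝ}
    {γ : ℝ → M} (hγ0 : γ 0 = x₀)
    (hγ : ∀ s ∈ Set.Icc (0:ℝ) ℓ, ∀ s' ∈ Set.Icc (0:ℝ) ℓ, dist (γ s) (γ s') = |s - s'|)
    {s p : ℝ} (hs0 : 0 ≤ s) (hs : s ≤ ℓ) (hp : |p| ≤ s) :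
    IsLeast {d : ℝ | ∃ y : M, ∃ w : ℝ, |w| = dist x₀ y ∧
      d = Real.sqrt (dist (γ s) y ^ 2 + (p - w) ^ 2)} ((s - |p|) / Real.sqrt 2) := by
  have hr : ∀ t ∈ Set.Icc (0:ℝ) ℓ, dist x₀ (γ t) = t := fun t ht => by
    rw [← hγ0, hγ 0 ⟨le_rfl, hs0.trans hs⟩ t ht, zero_sub, abs_neg, abs_of_nonneg ht.1]
  have habs := abs_nonneg p
  have hval : (s - |p|) / Real.sqrt 2 = Real.sqrt ((s - |p|) ^ 2 / 2) := by
    rw [Real.sqrt_div (sq_nonneg _), Real.sqrt_sq (by linarith)]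
  rw [hval]
  constructor
  · have ht : (s + |p|) / 2 ∈ Set.Icc (0:ℝ) ℓ := ⟨by linarith, by linarith⟩
    have hd : dist (γ s) (γ ((s + |p|) / 2)) = (s - |p|) / 2 := by
      rw [hγ s ⟨hs0, hs⟩ _ ht, abs_of_nonneg (by linarith)]
      ring
    rcases le_total 0 p with h | h
    · refine ⟨γ ((s + |p|) / 2), (s + |p|) / 2, ?_, ?_⟩
      · rw [hr _ ht, abs_of_nonneg ht.1]
      · rw [hd, abs_of_nonneg h]
        congr 1
        ring
    · refine ⟨γ ((s + |p|) / 2), -((s + |p|) / 2), ?_, ?_⟩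
      · rw [hr _ ht, abs_neg, abs_of_nonneg ht.1]
      · rw [hd, abs_of_nonpos h]
        congr 1
        ring
  · rintro d ⟨y, w, hw, rfl⟩
    apply Real.sqrt_le_sqrt
    have h1 : s ≤ |w| + dist (γ s) y := by
      have := dist_triangle x₀ y (γ s)
      rw [hr s ⟨hs0, hs⟩, dist_comm y, ← hw] at this
      exact this
    have h2 : |w| - |p| ≤ |p - w| := by
      rw [abs_sub_comm]
      exact abs_sub_abs_le_abs_sub w p
    have h3 : (s - |p|) ^ 2 ≤ (dist (γ s) y + |p - w|) ^ 2 :=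
      pow_le_pow_left₀ (by linarith) (by linarith) 2
    rw [← sq_abs (p - w)]
    linarith [sq_nonneg (dist (γ s) y - |p - w|),
      add_sq (dist (γ s) y) |p - w|, sub_sq (dist (γ s) y) |p - w|]


/-- equation (dist2) and the monotonicity claim,
proof of Proposition 4.1.  Let `γ : [0, ℓ] → M` (`ℓ > 0`) be a minimizing
geodesic from `x₀` to `x` with `dist x₀ x = ℓ`, and let `v : [0, ℓ] → ℝ` be
differentiable with `-1 < v' < 1` and `v 0 = 0`.  Then `s ↦ s - |v s|` is
strictly increasing on `[0, ℓ]`; consequently the distance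
`D s = dist₊((γ s, v s), ∂𝒲)` from `(γ s, v s)` to the cone boundary
`{(y, w) : |w| = dist x₀ y}` equals `(s - |v s|)/√2` for `s ∈ (0, ℓ]`, is
strictly positive there, and is strictly increasing on `(0, ℓ]`. -/
theorem stmt_8 {M : Type*} [MetricSpace M] (x₀ x : M) (ℓ : ℝ) (hℓpos : 0 < ℓ)
    (hℓ : dist x₀ x = ℓ)
    (γ : ℝ → M) (hγ0 : γ 0 = x₀) (hγℓ : γ ℓ = x)
    (hγ : ∀ s ∈ Set.Icc (0:ℝ) ℓ, ∀ s' ∈ Set.Icc (0:ℝ) ℓ,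
      dist (γ s) (γ s') = |s - s'|)
    (v : ℝ → ℝ) (v' : ℝ → ℝ)
    (hv : ∀ s ∈ Set.Icc (0:ℝ) ℓ,
      HasDerivWithinAt v (v' s) (Set.Icc (0:ℝ) ℓ) s)
    (hv' : ∀ s ∈ Set.Icc (0:ℝ) ℓ, -1 < v' s ∧ v' s < 1)
    (hv0 : v 0 = 0) :
    StrictMonoOn (fun s => s - |v s|) (Set.Icc (0:ℝ) ℓ) ∧
      (∀ s ∈ Set.Ioc (0:ℝ) ℓ,
        sInf {d : ℝ | ∃ y : M, ∃ w : ℝ, |w| = dist x₀ y ∧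
            d = Real.sqrt (dist (γ s) y ^ 2 + (v s - w) ^ 2)} =
          (s - |v s|) / Real.sqrt 2 ∧
        0 < sInf {d : ℝ | ∃ y : M, ∃ w : ℝ, |w| = dist x₀ y ∧
            d = Real.sqrt (dist (γ s) y ^ 2 + (v s - w) ^ 2)}) ∧
      StrictMonoOn
        (fun s => sInf {d : ℝ | ∃ y : M, ∃ w : ℝ, |w| = dist x₀ y ∧
            d = Real.sqrt (dist (γ s) y ^ 2 + (v s - w) ^ 2)})
        (Set.Ioc (0:ℝ) ℓ) := by
  have hmono : StrictMonoOn (fun s => s - |v s|) (Set.Icc (0:ℝ) ℓ) := by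
    intro a ha b hb hab
    have h1 := abs_sub_lt_of_deriv_lt_one hv hv' ha.1 hab hb.2
    have h2 := abs_sub_abs_le_abs_sub (v b) (v a)
    change a - |v a| < b - |v b|
    linarith
  have hpos : ∀ s ∈ Set.Ioc (0:ℝ) ℓ, 0 < s - |v s| := fun s hs => by
    simpa [hv0] using hmono ⟨le_rfl, hℓpos.le⟩ ⟨hs.1.le, hs.2⟩ hs.1
  have hinf : ∀ s ∈ Set.Ioc (0:ℝ) ℓ,
      sInf {d : ℝ | ∃ y : M, ∃ w : ℝ, |w| = dist x₀ y ∧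
        d = Real.sqrt (dist (γ s) y ^ 2 + (v s - w) ^ 2)} = (s - |v s|) / Real.sqrt 2 :=
    fun s hs => (isLeast_coneDist hγ0 hγ hs.1.le hs.2 (sub_pos.1 (hpos s hs)).le).csInf_eq
  have hsqrt : 0 < Real.sqrt 2 := Real.sqrt_pos.2 two_pos
  refine ⟨hmono, fun s hs => ⟨hinf s hs, ?_⟩, fun a ha b hb hab => ?_⟩
  · rw [hinf s hs]
    exact div_pos (hpos s hs) hsqrt
  · beta_reduce
    rw [hinf a ha, hinf b hb]
    exact div_lt_div_of_pos_right (hmono ⟨ha.1.le, ha.2⟩ ⟨hb.1.le, hb.2⟩ hab) hsqrt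
end
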